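/- arXiv:1412.1429 — 2 statements merged into one kernel-verified Lean document; each statement's English description precedes it below -/
import Mathlib

section
/- Let μ ⪯ ν be probability measures on ℝ in convex order and let Γ ⊆ ℝ² be a maximising monotonicity set for the cost function c(x,y) := |x+y|, i.e. for every measure α on ℝ² with finite support contained in Γ and every competitor α' of α one has ∫ |x+y| dα ≥ ∫ |x+y| dα'. Suppose (x,y⁻), (x,y⁺), (x',y') ∈ Γ with y⁻ < y' < y⁺. Then none of the following constellations is possible: (I1) x' < x and y⁻ < −x' ≤ y'; (I2) x < x' and y' ≤ −x' < y⁺; (I3) x' < x and −x ≤ y⁻ < −x' < y⁺; (I4) x < x' and y⁻ < −x' < y⁺ ≤ −x. -/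
open MeasureTheory

noncomputable section

/-- `μ` and `ν` are in convex order. -/
def InConvexOrder (μ ν : Measure ℝ) : Prop :=
  ∀ φ : ℝ → ℝ, ConvexOn ℝ Set.univ φ → Integrable φ μ → Integrable φ ν →
    ∫ x, φ x ∂μ ≤ ∫ x, φ x ∂ν

/-- `α` has finite support contained in `Γ`. -/
def HasFiniteSupportIn (α : Measure (ℝ × ℝ)) (Γ : Set (ℝ × ℝ)) : Prop :=
  ∃ S : Finset (ℝ × ℝ), ↑S ⊆ Γ ∧ α ((↑S : Set (ℝ × ℝ))ᶜ) = 0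

/-- `α'` is a competitor of `α`: a finitely supported measure with the same
marginals whose fiberwise barycenters agree with those of `α`. -/
def IsCompetitor (α α' : Measure (ℝ × ℝ)) : Prop :=
  (∃ S : Finset (ℝ × ℝ), α' ((↑S : Set (ℝ × ℝ))ᶜ) = 0) ∧
  α'.map Prod.fst = α.map Prod.fst ∧
  α'.map Prod.snd = α.map Prod.snd ∧
  ∀ x : ℝ, ∫ p in {p : ℝ × ℝ | p.1 = x}, p.2 ∂α' =
    ∫ p in {p : ℝ × ℝ | p.1 = x}, p.2 ∂α

/-- `Γ` is a minimising monotonicity set for `(c, c')`: for every finitely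
supported measure `α` with support in `Γ` and every competitor `α'` of `α`,
`∫ c dα ≤ ∫ c dα'`, and `∫ c dα = ∫ c dα'` implies `∫ c' dα ≥ ∫ c' dα'`. -/
def IsMinMonotonicitySet (c c' : ℝ → ℝ → ℝ) (Γ : Set (ℝ × ℝ)) : Prop :=
  ∀ α : Measure (ℝ × ℝ), IsFiniteMeasure α → HasFiniteSupportIn α Γ →
    ∀ α' : Measure (ℝ × ℝ), IsCompetitor α α' →
      (∫ p : ℝ × ℝ, c p.1 p.2 ∂α ≤ ∫ p : ℝ × ℝ, c p.1 p.2 ∂α') ∧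
      (∫ p : ℝ × ℝ, c p.1 p.2 ∂α = ∫ p : ℝ × ℝ, c p.1 p.2 ∂α' →
        ∫ p : ℝ × ℝ, c' p.1 p.2 ∂α' ≤ ∫ p : ℝ × ℝ, c' p.1 p.2 ∂α)

/-- `Γ` is a maximising monotonicity set for `(c, c')`: for every finitely
supported measure `α` with support in `Γ` and every competitor `α'` of `α`,
`∫ c dα ≥ ∫ c dα'`, and `∫ c dα = ∫ c dα'` implies `∫ c' dα ≤ ∫ c' dα'`. -/
def IsMaxMonotonicitySet (c c' : ℝ → ℝ → ℝ) (Γ : Set (ℝ × ℝ)) : Prop :=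
  ∀ α : Measure (ℝ × ℝ), IsFiniteMeasure α → HasFiniteSupportIn α Γ →
    ∀ α' : Measure (ℝ × ℝ), IsCompetitor α α' →
      (∫ p : ℝ × ℝ, c p.1 p.2 ∂α' ≤ ∫ p : ℝ × ℝ, c p.1 p.2 ∂α) ∧
      (∫ p : ℝ × ℝ, c p.1 p.2 ∂α = ∫ p : ℝ × ℝ, c p.1 p.2 ∂α' →
        ∫ p : ℝ × ℝ, c' p.1 p.2 ∂α ≤ ∫ p : ℝ × ℝ, c' p.1 p.2 ∂α')

/-- `Γ` is a maximising monotonicity set for the single cost `c`: for every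
finitely supported measure `α` with support in `Γ` and every competitor `α'`,
`∫ c dα ≥ ∫ c dα'`. -/
def IsMaxMonotonicitySetSingle (c : ℝ → ℝ → ℝ) (Γ : Set (ℝ × ℝ)) : Prop :=
  ∀ α : Measure (ℝ × ℝ), IsFiniteMeasure α → HasFiniteSupportIn α Γ →
    ∀ α' : Measure (ℝ × ℝ), IsCompetitor α α' →
      ∫ p : ℝ × ℝ, c p.1 p.2 ∂α' ≤ ∫ p : ℝ × ℝ, c p.1 p.2 ∂α

/-- Three weighted Dirac masses. -/
def threeDirac (a b c : ℝ) (p q r : ℝ × ℝ) : Measure (ℝ × ℝ) :=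
  ENNReal.ofReal a • Measure.dirac p + ENNReal.ofReal b • Measure.dirac q
    + ENNReal.ofReal c • Measure.dirac r

theorem integral_threeDirac {a b c : ℝ} (ha : 0 ≤ a) (hb : 0 ≤ b) (hc : 0 ≤ c)
    (p q r : ℝ × ℝ) (F : ℝ × ℝ → ℝ) :
    ∫ z, F z ∂(threeDirac a b c p q r) = a * F p + b * F q + c * F r := by
  have hi : ∀ (t : ℝ) (z : ℝ × ℝ),
      Integrable F (ENNReal.ofReal t • Measure.dirac z) := fun t z =>
    (integrable_dirac (by simp)).smul_measure ENNReal.ofReal_ne_top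
  unfold threeDirac
  rw [integral_add_measure ((hi _ _).add_measure (hi _ _)) (hi _ _),
    integral_add_measure (hi _ _) (hi _ _)]
  simp [integral_smul_measure, ENNReal.toReal_ofReal, ha, hb, hc]

theorem threeDirac_compl (a b c : ℝ) (p q r : ℝ × ℝ) :
    threeDirac a b c p q r ((↑({p, q, r} : Finset (ℝ × ℝ)) : Set (ℝ × ℝ))ᶜ) = 0 := by
  have hm : MeasurableSet ((↑({p, q, r} : Finset (ℝ × ℝ)) : Set (ℝ × ℝ))ᶜ) :=
    (Finset.measurableSet _).compl
  simp only [threeDirac, Measure.add_apply, Measure.smul_apply, Measure.dirac_apply' _ hm]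
  simp

theorem map_threeDirac (a b c : ℝ) (p q r : ℝ × ℝ) (f : ℝ × ℝ → ℝ) (hf : Measurable f) :
    (threeDirac a b c p q r).map f = ENNReal.ofReal a • Measure.dirac (f p)
      + ENNReal.ofReal b • Measure.dirac (f q) + ENNReal.ofReal c • Measure.dirac (f r) := by
  simp only [threeDirac, Measure.map_add _ _ hf, Measure.map_smul, Measure.map_dirac' hf]

theorem key_ineq (Γ : Set (ℝ × ℝ))
    (hΓ : IsMaxMonotonicitySetSingle (fun x y => |x + y|) Γ)
    (x x' ym yp y' : ℝ)
    (hm : (x, ym) ∈ Γ) (hp : (x, yp) ∈ Γ) (h' : (x', y') ∈ Γ)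
    (h1 : ym < y') (h2 : y' < yp) :
    (yp - y') * |x' + ym| + (y' - ym) * |x' + yp| + (yp - ym) * |x + y'|
      ≤ (yp - y') * |x + ym| + (y' - ym) * |x + yp| + (yp - ym) * |x' + y'| := by
  have hA : 0 ≤ yp - y' := by linarith
  have hB : 0 ≤ y' - ym := by linarith
  have hC : 0 ≤ yp - ym := by linarith
  have hsum : ENNReal.ofReal (yp - ym) = ENNReal.ofReal (yp - y') + ENNReal.ofReal (y' - ym) := by
    rw [← ENNReal.ofReal_add hA hB]; congr 1; ring
  have h := hΓ (threeDirac (yp - y') (y' - ym) (yp - ym) (x, ym) (x, yp) (x', y'))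
    ⟨by simp [threeDirac]⟩
    ⟨{(x, ym), (x, yp), (x', y')}, by
      intro z hz
      simp only [Finset.coe_insert, Finset.coe_singleton, Set.mem_insert_iff,
        Set.mem_singleton_iff] at hz
      rcases hz with rfl | rfl | rfl <;> assumption, threeDirac_compl _ _ _ _ _ _⟩
    (threeDirac (yp - y') (y' - ym) (yp - ym) (x', ym) (x', yp) (x, y'))
    ⟨⟨_, threeDirac_compl _ _ _ _ _ _⟩, by
      rw [map_threeDirac _ _ _ _ _ _ _ measurable_fst, map_threeDirac _ _ _ _ _ _ _ measurable_fst]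
      simp only [hsum, add_smul]
      abel, by
      rw [map_threeDirac _ _ _ _ _ _ _ measurable_snd, map_threeDirac _ _ _ _ _ _ _ measurable_snd],
      by
      intro t
      have hs : MeasurableSet {p : ℝ × ℝ | p.1 = t} := measurable_fst (measurableSet_singleton t)
      rw [← integral_indicator hs, ← integral_indicator hs,
        integral_threeDirac hA hB hC, integral_threeDirac hA hB hC]
      simp only [Set.indicator_apply, Set.mem_ofPred_eq]
      split_ifs <;> ring⟩
  rw [integral_threeDirac hA hB hC, integral_threeDirac hA hB hC] at h
  exact h

/-- Corollary (forbidden constellations for a maximiser of `|x+y|`): if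
`(x,y⁻), (x,y⁺), (x',y') ∈ Γ` with `y⁻ < y' < y⁺`, then none of the
constellations (I1)–(I4) is possible. -/
theorem max_forbidden_constellations
    (μ ν : Measure ℝ) [IsProbabilityMeasure μ] [IsProbabilityMeasure ν]
    (hconv : InConvexOrder μ ν)
    (Γ : Set (ℝ × ℝ))
    (hΓ : IsMaxMonotonicitySetSingle (fun x y => |x + y|) Γ)
    (x x' ym yp y' : ℝ)
    (hm : (x, ym) ∈ Γ) (hp : (x, yp) ∈ Γ) (h' : (x', y') ∈ Γ)
    (h1 : ym < y') (h2 : y' < yp) :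
    ¬(x' < x ∧ ym < -x' ∧ -x' ≤ y') ∧
    ¬(x < x' ∧ y' ≤ -x' ∧ -x' < yp) ∧
    ¬(x' < x ∧ -x ≤ ym ∧ ym < -x' ∧ -x' < yp) ∧
    ¬(x < x' ∧ ym < -x' ∧ -x' < yp ∧ yp ≤ -x) := by
  have key := key_ineq Γ hΓ x x' ym yp y' hm hp h' h1 h2
  have hA : 0 < yp - y' := by linarith
  have hB : 0 < y' - ym := by linarith
  refine ⟨?_, ?_, ?_, ?_⟩
  · rintro ⟨a, b, c⟩
    rw [abs_of_nonpos (by linarith : x' + ym ≤ 0), abs_of_nonneg (by linarith : 0 ≤ x' + yp),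
      abs_of_nonneg (by linarith : 0 ≤ x + y'), abs_of_nonneg (by linarith : 0 ≤ x + yp),
      abs_of_nonneg (by linarith : 0 ≤ x' + y')] at key
    rcases abs_cases (x + ym) with ⟨e, _⟩ | ⟨e, _⟩ <;> rw [e] at key
    · nlinarith [mul_pos hA (by linarith : 0 < -x' - ym)]
    · nlinarith [mul_pos hA (by linarith : 0 < x - x')]
  · rintro ⟨a, b, c⟩
    rw [abs_of_nonpos (by linarith : x' + ym ≤ 0), abs_of_nonneg (by linarith : 0 ≤ x' + yp),
      abs_of_nonpos (by linarith : x + y' ≤ 0), abs_of_nonpos (by linarith : x + ym ≤ 0),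
      abs_of_nonpos (by linarith : x' + y' ≤ 0)] at key
    rcases abs_cases (x + yp) with ⟨e, _⟩ | ⟨e, _⟩ <;> rw [e] at key
    · nlinarith [mul_pos hB (by linarith : 0 < x' - x)]
    · nlinarith [mul_pos hB (by linarith : 0 < x' + yp)]
  · rintro ⟨a, b, c, d⟩
    rw [abs_of_nonpos (by linarith : x' + ym ≤ 0), abs_of_nonneg (by linarith : 0 ≤ x' + yp),
      abs_of_nonneg (by linarith : 0 ≤ x + y'), abs_of_nonneg (by linarith : 0 ≤ x + ym),
      abs_of_nonneg (by linarith : 0 ≤ x + yp)] at key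
    rcases abs_cases (x' + y') with ⟨e, _⟩ | ⟨e, _⟩ <;> rw [e] at key
    · nlinarith [mul_pos hA (by linarith : 0 < -x' - ym)]
    · nlinarith [mul_pos hB (by linarith : 0 < x' + yp)]
  · rintro ⟨a, b, c, d⟩
    rw [abs_of_nonpos (by linarith : x' + ym ≤ 0), abs_of_nonneg (by linarith : 0 ≤ x' + yp),
      abs_of_nonpos (by linarith : x + y' ≤ 0), abs_of_nonpos (by linarith : x + ym ≤ 0),
      abs_of_nonpos (by linarith : x + yp ≤ 0)] at key
    rcases abs_cases (x' + y') with ⟨e, _⟩ | ⟨e, _⟩ <;> rw [e] at key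
    · nlinarith [mul_pos hA (by linarith : 0 < -x' - ym)]
    · nlinarith [mul_pos hB (by linarith : 0 < x' + yp)]
end
end

section
/- Suppose (X_t)_{t∈[0,2]} is a martingale on a filtered probability space with respect to a probability law ℚ, with each X_t integrable. Set μ := Law(X₁) and ν := Law(X₂), fix K ∈ ℝ, and choose π ∈ 𝓜(μ,ν) such that ∫ (x+y−K)₊ dπ ≥ ∫ (x+y−K)₊ dπ' for all π' ∈ 𝓜(μ,ν). Then for every 0 ≤ t ≤ 1, E_ℚ[(X_t + X₂ − K)₊] ≤ ∫ (x+y−K)₊ dπ(x,y). -/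
open MeasureTheory

noncomputable section

/-- A martingale coupling of `μ` and `ν`. -/
def IsMartingaleCoupling (μ ν : Measure ℝ) (π : Measure (ℝ × ℝ)) : Prop :=
  IsProbabilityMeasure π ∧ π.map Prod.fst = μ ∧ π.map Prod.snd = ν ∧
    ∀ h : ℝ → ℝ, Measurable h → (∃ C, ∀ x, |h x| ≤ C) →
      ∫ p : ℝ × ℝ, h p.1 * (p.2 - p.1) ∂π = 0

section helpers

open ProbabilityTheory
/-- Pointwise form of the mass-exchange selection. -/
theorem sel_case1 (P P0 R R0 N N0 a b wa wb : ℝ) (hP : 0 ≤ P) (hP0 : 0 ≤ P0)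
    (hR : 0 ≤ R) (hR0 : 0 ≤ R0) (hwa : P + P0 = wa) (hwb : R + R0 = wb) (ha : 0 < wa) (hb : 0 < wb)
    (hN : N + N0 = wb * b) (hab : a < b)
    (hq : R * wa < P * wb) (h1 : N0 ≤ a * R0) (al be U r c : ℝ) (hal : al = N - a * R)
    (hbe : be = a * R0 - N0) (hU : U = R * (be / al) + R0) (hr : r = min 1 (wa / U))
    (hc : c = U * r / wa) :
    (0 ≤ r ∧ r ≤ 1) ∧ (0 ≤ c ∧ c ≤ 1) ∧ (0 ≤ be / al * r ∧ be / al * r ≤ 1) ∧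
    wa * c = R * (be / al * r) + R0 * r ∧ wa * a * c = N * (be / al * r) + N0 * r ∧
    wb * (P * (1 - c) + R * (be / al * r)) ≤ wa * (R * (1 - be / al * r) + P * c) := by
  have hbe0 : 0 ≤ be := by rw [hbe]; linarith
  have hd : be < al := by
    have : al - be = wb * (b - a) := by rw [hal, hbe]; linear_combination hN - a * hwb
    have := mul_pos hb (sub_pos.2 hab)
    linarith
  have hal0 : 0 < al := by linarith
  set e := be / al with he
  have he0 : 0 ≤ e := by positivity
  have he1 : e ≤ 1 := by rw [he, div_le_one hal0]; exact hd.le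
  have hea : e * al = be := by rw [he]; field_simp
  have hR0p : 0 < R0 := by
    rcases hR0.eq_or_lt with h | h
    · exfalso
      subst h
      have : R = wb := by linarith
      rw [this] at hq
      have : wa < P := by nlinarith
      linarith
    · exact h
  have hUp : 0 < U := by rw [hU]; positivity
  have hr0 : 0 ≤ r := by rw [hr]; positivity
  have hr1 : r ≤ 1 := by rw [hr]; exact min_le_left _ _
  have hc0 : 0 ≤ c := by rw [hc]; positivity
  have hcw : wa * c = U * r := by rw [hc]; field_simp
  have hUr : U * r ≤ wa := by
    have : r ≤ wa / U := by rw [hr]; exact min_le_right _ _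
    rw [le_div_iff₀ hUp] at this; linarith
  have hc1 : c ≤ 1 := by rw [hc, div_le_one ha]; exact hUr
  have her0 : 0 ≤ e * r := by positivity
  have her1 : e * r ≤ r := by nlinarith
  have hmass : wa * c = R * (e * r) + R0 * r := by rw [hcw, hU]; ring
  -- mass of A moved from b is at most the `q_b` fraction
  have k1 : wb * (R * (e * r)) ≤ R * (wa * c) := by
    rw [hmass, ← hwb]
    nlinarith [mul_nonneg (mul_nonneg hR hR0) (sub_nonneg.2 her1)]
  have k2 : R * (e * r) ≤ P * c := by
    have : wb * (R * (e * r)) ≤ wb * (P * c) := by nlinarith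
    exact le_of_mul_le_mul_left this hb
  refine ⟨⟨hr0, hr1⟩, ⟨hc0, hc1⟩, ⟨her0, her1.trans hr1⟩, hmass, ?_, ?_⟩
  · have : a * (wa * c) = a * (R * (e * r) + R0 * r) := by rw [hmass]
    have h2 : (e * al) * r = be * r := by rw [hea]
    rw [hal, hbe] at h2
    linear_combination this - h2
  · rcases min_choice 1 (wa / U) with h | h
    · have hr' : r = 1 := by rw [hr, h]
      rw [hr'] at hmass k2 her1 her0 ⊢
      have s1 : P * wb ≤ wa * (R * (1 - e * 1) + P * c) := by
        have : wb = R * (1 - e * 1) + wa * c := by rw [hmass, ← hwb]; ring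
        have h3 : 0 ≤ R * (1 - e * 1) := mul_nonneg hR (by linarith)
        have h4 : P ≤ wa := by linarith
        rw [this]; nlinarith [mul_nonneg h3 (sub_nonneg.2 h4)]
      have s2 := mul_le_mul_of_nonneg_left k2 hb.le
      linarith
    · have hr' : U * r = wa := by rw [hr, h]; field_simp
      have hc' : c = 1 := by rw [hc, hr']; field_simp
      rw [hc'] at k1 k2 ⊢
      have s2 := mul_le_mul_of_nonneg_left k2 ha.le
      linarith

theorem sel_case2 (P P0 M M0 R R0 N0 a wa wb k : ℝ) (hP : 0 ≤ P) (hP0 : 0 ≤ P0)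
    (hR : 0 ≤ R) (hR0 : 0 ≤ R0) (hwa : P + P0 = wa) (hwb : R + R0 = wb) (ha : 0 < wa) (hb : 0 < wb)
    (hM : M + M0 = wa * a) (hk1 : k * P ≤ M) (hk3 : N0 ≤ k * R0)
    (hq : R * wa < P * wb) (h1 : a * R0 < N0) (al be U s c : ℝ) (hal : al = M * R0 - N0 * P)
    (hbe : be = N0 * P0 - M0 * R0) (hU : U = P + P0 * (al / be)) (hs : s = min 1 (R0 / U))
    (hc : c = U * s / R0) :
    (0 ≤ s ∧ s ≤ 1) ∧ (0 ≤ c ∧ c ≤ 1) ∧ (0 ≤ al / be * s ∧ al / be * s ≤ 1) ∧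
    P * s + P0 * (al / be * s) = R0 * c ∧ M * s + M0 * (al / be * s) = N0 * c ∧
    wb * (P * (1 - s)) ≤ wa * (R + P * s) := by
  have hal0 : 0 ≤ al := by rw [hal]; nlinarith
  have hd : al < be := by
    have : be - al = wa * (N0 - a * R0) := by
      rw [hal, hbe]; linear_combination N0 * hwa - R0 * hM
    have := mul_pos ha (sub_pos.2 h1)
    linarith
  have hbe0 : 0 < be := by linarith
  set e := al / be with he
  have he0 : 0 ≤ e := by positivity
  have he1 : e ≤ 1 := by rw [he, div_le_one hbe0]; exact hd.le
  have hea : e * be = al := by rw [he]; field_simp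
  have hR0p : 0 < R0 := by
    rcases hR0.eq_or_lt with h | h
    · exfalso
      subst h
      have : R = wb := by linarith
      rw [this] at hq
      have : wa < P := by nlinarith
      linarith
    · exact h
  have hPp : 0 < P := by
    have : 0 ≤ R * wa := by positivity
    exact pos_of_mul_pos_left (this.trans_lt hq) hb.le
  have hUp : 0 < U := by rw [hU]; positivity
  have hs0 : 0 ≤ s := by rw [hs]; positivity
  have hs1 : s ≤ 1 := by rw [hs]; exact min_le_left _ _
  have hc0 : 0 ≤ c := by rw [hc]; positivity
  have hcw : R0 * c = U * s := by rw [hc]; field_simp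
  have hUr : U * s ≤ R0 := by
    have : s ≤ R0 / U := by rw [hs]; exact min_le_right _ _
    rw [le_div_iff₀ hUp] at this; linarith
  have hc1 : c ≤ 1 := by rw [hc, div_le_one hR0p]; exact hUr
  have her0 : 0 ≤ e * s := by positivity
  have her1 : e * s ≤ s := by nlinarith
  have hmass : P * s + P0 * (e * s) = R0 * c := by rw [hcw, hU]; ring
  refine ⟨⟨hs0, hs1⟩, ⟨hc0, hc1⟩, ⟨her0, her1.trans hs1⟩, hmass, ?_, ?_⟩
  · have h2 : (e * be) * s = al * s := by rw [hea]
    rw [hal, hbe] at h2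
    have h3 : R0 * (M * s + M0 * (e * s)) = R0 * (N0 * c) := by
      linear_combination N0 * hmass - h2
    exact mul_left_cancel₀ hR0p.ne' h3
  · rcases min_choice 1 (R0 / U) with h | h
    · have hs' : s = 1 := by rw [hs, h]
      rw [hs']
      have : 0 ≤ wa * (R + P * 1) := by positivity
      simpa using this
    · have hs' : U * s = R0 := by rw [hs, h]; field_simp
      have hc' : c = 1 := by rw [hc, hs']; field_simp
      rw [hc'] at hmass
      have : P * wb ≤ wa * (R + P * s) := by
        rw [← hwb, ← hwa]
        have : R0 = P * s + P0 * (e * s) := by linarith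
        rw [this]
        nlinarith [mul_nonneg (mul_nonneg hPp.le hP0) (sub_nonneg.2 her1), mul_nonneg hP0 hR]
      nlinarith [mul_nonneg (mul_nonneg hb.le hP) hs0]

/-- measurable selection of the exchange fractions. -/
theorem sel_exists {α : Type*} [MeasurableSpace α] (P P0 M M0 R R0 N N0 : α → ℝ)
    (mP : Measurable P) (mP0 : Measurable P0) (mM : Measurable M) (mM0 : Measurable M0)
    (mR : Measurable R) (mR0 : Measurable R0) (mN : Measurable N) (mN0 : Measurable N0) :
    ∃ t : Fin 4 → α → ℝ, (∀ i, Measurable (t i)) ∧ (∀ i x, 0 ≤ t i x) ∧ (∀ i x, t i x ≤ 1) ∧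
      ∀ x a b wa wb k, 0 ≤ P x → 0 ≤ P0 x → 0 ≤ R x → 0 ≤ R0 x → P x + P0 x = wa →
        R x + R0 x = wb → 0 < wa → 0 < wb → M x + M0 x = wa * a → N x + N0 x = wb * b → a < b →
        k * P x ≤ M x → N0 x ≤ k * R0 x →
        P x * t 0 x + P0 x * t 1 x = R x * t 2 x + R0 x * t 3 x ∧
        M x * t 0 x + M0 x * t 1 x = N x * t 2 x + N0 x * t 3 x ∧
        wb * (P x * (1 - t 0 x) + R x * t 2 x) ≤ wa * (R x * (1 - t 2 x) + P x * t 0 x) := by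
  classical
  set wa : α → ℝ := fun x => P x + P0 x with hwa
  set wb : α → ℝ := fun x => R x + R0 x with hwb
  set a : α → ℝ := fun x => (M x + M0 x) / wa x with ha
  have mwa : Measurable wa := mP.add mP0
  have mwb : Measurable wb := mR.add mR0
  have ma : Measurable a := (mM.add mM0).div mwa
  set al : α → ℝ := fun x => N x - a x * R x with hal
  set be : α → ℝ := fun x => a x * R0 x - N0 x with hbe
  set U : α → ℝ := fun x => R x * (be x / al x) + R0 x with hU
  set r : α → ℝ := fun x => min 1 (wa x / U x) with hr
  set c : α → ℝ := fun x => U x * r x / wa x with hc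
  set al' : α → ℝ := fun x => M x * R0 x - N0 x * P x with hal'
  set be' : α → ℝ := fun x => N0 x * P0 x - M0 x * R0 x with hbe'
  set U' : α → ℝ := fun x => P x + P0 x * (al' x / be' x) with hU'
  set s : α → ℝ := fun x => min 1 (R0 x / U' x) with hs
  set c' : α → ℝ := fun x => U' x * s x / R0 x with hc'
  have mal : Measurable al := by fun_prop
  have mbe : Measurable be := by fun_prop
  have mU : Measurable U := by fun_prop
  have mr : Measurable r := by fun_prop
  have mc : Measurable c := by fun_prop
  have mal' : Measurable al' := by fun_prop
  have mbe' : Measurable be' := by fun_prop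
  have mU' : Measurable U' := by fun_prop
  have ms : Measurable s := by fun_prop
  have mc' : Measurable c' := by fun_prop
  let u : Fin 4 → α → ℝ := ![c, c, fun x => be x / al x * r x, r]
  let v : Fin 4 → α → ℝ := ![s, fun x => al' x / be' x * s x, fun _ => 0, c']
  have mu : ∀ i, Measurable (u i) := by
    intro i; fin_cases i <;> simp [u] <;> fun_prop
  have mv : ∀ i, Measurable (v i) := by
    intro i; fin_cases i <;> simp [v] <;> fun_prop
  let w : Fin 4 → α → ℝ := fun i x =>
    if P x * wb x ≤ R x * wa x then 0 else if N0 x ≤ a x * R0 x then u i x else v i x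
  have mw : ∀ i, Measurable (w i) := by
    intro i
    refine Measurable.ite (measurableSet_le (by fun_prop) (by fun_prop)) measurable_const ?_
    exact Measurable.ite (measurableSet_le (by fun_prop) (by fun_prop)) (mu i) (mv i)
  refine ⟨fun i x => max 0 (min 1 (w i x)), fun i => ?_, fun i x => le_max_left _ _,
    fun i x => max_le zero_le_one (min_le_left _ _), ?_⟩
  · have := mw i
    fun_prop
  intro x a0 b0 wa0 wb0 k hP hP0 hR hR0 hwa0 hwb0 pa pb hM hN hab hk1 hk3
  have ea : a x = a0 := by
    simp only [ha, hwa]; rw [hM, hwa0]; field_simp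
  have clamp : ∀ y : ℝ, 0 ≤ y ∧ y ≤ 1 → max 0 (min 1 y) = y := by
    rintro y ⟨h0, h1⟩; rw [min_eq_right h1, max_eq_right h0]
  have ewa : wa x = wa0 := hwa0
  have ewb : wb x = wb0 := hwb0
  by_cases h0 : P x * wb x ≤ R x * wa x
  · have hw : ∀ i, w i x = 0 := fun i => by simp only [w]; rw [if_pos h0]
    simp only [hw]
    rw [ewa, ewb] at h0
    norm_num
    linarith
  · have h0' := h0
    rw [ewa, ewb, not_le] at h0'
    by_cases h1 : N0 x ≤ a x * R0 x
    · have hw : ∀ i, w i x = u i x := fun i => by simp only [w]; rw [if_neg h0, if_pos h1]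
      rw [ea] at h1
      obtain ⟨e1, e2, e3, e4, e5, e6⟩ := sel_case1 (P x) (P0 x) (R x) (R0 x) (N x) (N0 x) a0 b0 wa0 wb0 hP hP0 hR hR0 hwa0 hwb0 pa
        pb hN hab h0' h1 (al x) (be x) (U x) (r x) (c x) (by simp [hal, ea]) (by simp [hbe, ea])
        rfl (by simp only [hr, ewa]) (by simp only [hc, ewa])
      simp only [hw]
      simp only [u, Matrix.cons_val]
      rw [clamp _ e1, clamp _ e2, clamp _ e3]
      refine ⟨?_, ?_, e6⟩
      · rw [← e4, ← hwa0]; ring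
      · rw [← e5, ← hM]; ring
    · have hw : ∀ i, w i x = v i x := fun i => by simp only [w]; rw [if_neg h0, if_neg h1]
      rw [ea, not_le] at h1
      obtain ⟨e1, e2, e3, e4, e5, e6⟩ := sel_case2 (P x) (P0 x) (M x) (M0 x) (R x) (R0 x) (N0 x) a0 wa0 wb0 k hP hP0 hR hR0 hwa0 hwb0 pa
        pb hM hk1 hk3 h0' h1 (al' x) (be' x) (U' x) (s x) (c' x) rfl rfl rfl rfl rfl
      simp only [hw]
      simp only [v, Matrix.cons_val]
      rw [clamp _ e1, clamp _ e2, clamp _ e3]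
      refine ⟨?_, ?_, ?_⟩
      · rw [e4]; simp
      · rw [e5]; simp
      · simpa using e6


/-- unnormalised pairing weight -/
noncomputable def pairV (p : ℝ × ℝ × ℝ) : ℝ := if (p.2.1 - p.1) * (p.2.2 - p.1) < 0 then |p.2.2 - p.1| else 0

/-- exchange of the last two coordinates -/
def sw (p : ℝ × ℝ × ℝ) : ℝ × ℝ × ℝ := (p.1, p.2.2, p.2.1)

theorem tau_exists (K : ℝ) (q m : ℝ × ℝ → ℝ) (hq : Measurable q) (hm : Measurable m)
    (q0 : ∀ v, 0 ≤ q v) (q1 : ∀ v, q v ≤ 1) (hm1 : ∀ v, (K - v.1) * q v ≤ m v)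
    (hm2 : ∀ v, v.2 - m v ≤ (K - v.1) * (1 - q v)) :
    ∃ τ1 τ0 : ℝ × ℝ × ℝ → ℝ, Measurable τ1 ∧ Measurable τ0 ∧ (∀ p, 0 ≤ τ1 p) ∧ (∀ p, τ1 p ≤ 1) ∧
      (∀ p, 0 ≤ τ0 p) ∧ (∀ p, τ0 p ≤ 1) ∧ (∀ p, p.2.1 = p.1 → τ1 p = 0 ∧ τ0 p = 0) ∧
      ∀ z x x',
        pairV (z, x, x') * (q (z, x) * τ1 (z, x, x') + (1 - q (z, x)) * τ0 (z, x, x')) =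
        pairV (z, x', x) * (q (z, x') * τ1 (z, x', x) + (1 - q (z, x')) * τ0 (z, x', x)) ∧
        pairV (z, x, x') * (m (z, x) * τ1 (z, x, x') + (x - m (z, x)) * τ0 (z, x, x')) =
        pairV (z, x', x) * (m (z, x') * τ1 (z, x', x) + (x' - m (z, x')) * τ0 (z, x', x)) ∧
        0 ≤ pairV (z, x, x') * ((x - z) * (q (z, x) * (1 - τ1 (z, x, x'))) + (x' - z) * (q (z, x) * τ1 (z, x, x'))) +
          pairV (z, x', x) * ((x' - z) * (q (z, x') * (1 - τ1 (z, x', x))) + (x - z) * (q (z, x') * τ1 (z, x', x))) := by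
  classical
  obtain ⟨t, mt, t0, t1, ht⟩ := sel_exists (α := ℝ × ℝ × ℝ)
    (fun p => (p.2.2 - p.1) * q (p.1, p.2.1)) (fun p => (p.2.2 - p.1) * (1 - q (p.1, p.2.1)))
    (fun p => (p.2.2 - p.1) * m (p.1, p.2.1)) (fun p => (p.2.2 - p.1) * (p.2.1 - m (p.1, p.2.1)))
    (fun p => (p.1 - p.2.1) * q (p.1, p.2.2)) (fun p => (p.1 - p.2.1) * (1 - q (p.1, p.2.2)))
    (fun p => (p.1 - p.2.1) * m (p.1, p.2.2)) (fun p => (p.1 - p.2.1) * (p.2.2 - m (p.1, p.2.2)))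
    (by fun_prop) (by fun_prop) (by fun_prop) (by fun_prop)
    (by fun_prop) (by fun_prop) (by fun_prop) (by fun_prop)
  let τ : Fin 4 → Fin 4 → ℝ × ℝ × ℝ → ℝ := fun i j p =>
    if p.2.1 < p.1 then (if p.1 < p.2.2 then t i p else 0) else
      if p.1 < p.2.1 then (if p.2.2 < p.1 then t j (sw p) else 0) else 0
  have msw : Measurable sw := by unfold sw; fun_prop
  have mτ : ∀ i j, Measurable (τ i j) := by
    intro i j
    refine Measurable.ite (measurableSet_lt (by fun_prop) (by fun_prop)) ?_ ?_
    · exact Measurable.ite (measurableSet_lt (by fun_prop) (by fun_prop)) (mt i) measurable_const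
    · refine Measurable.ite (measurableSet_lt (by fun_prop) (by fun_prop)) ?_ measurable_const
      exact Measurable.ite (measurableSet_lt (by fun_prop) (by fun_prop)) ((mt j).comp msw) measurable_const
  have n0 : ∀ i j p, 0 ≤ τ i j p := by
    intro i j p; simp only [τ]; split_ifs <;> first | exact t0 _ _ | exact le_rfl
  have n1 : ∀ i j p, τ i j p ≤ 1 := by
    intro i j p; simp only [τ]; split_ifs <;> first | exact t1 _ _ | exact zero_le_one
  have key : ∀ z a b, a < z → z < b → 
        pairV (z, a, b) * (q (z, a) * τ 0 2 (z, a, b) + (1 - q (z, a)) * τ 1 3 (z, a, b)) =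
        pairV (z, b, a) * (q (z, b) * τ 0 2 (z, b, a) + (1 - q (z, b)) * τ 1 3 (z, b, a)) ∧
        pairV (z, a, b) * (m (z, a) * τ 0 2 (z, a, b) + (a - m (z, a)) * τ 1 3 (z, a, b)) =
        pairV (z, b, a) * (m (z, b) * τ 0 2 (z, b, a) + (b - m (z, b)) * τ 1 3 (z, b, a)) ∧
        0 ≤ pairV (z, a, b) * ((a - z) * (q (z, a) * (1 - τ 0 2 (z, a, b))) + (b - z) * (q (z, a) * τ 0 2 (z, a, b))) +
          pairV (z, b, a) * ((b - z) * (q (z, b) * (1 - τ 0 2 (z, b, a))) + (a - z) * (q (z, b) * τ 0 2 (z, b, a))) := by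
    intro z a b ha hb
    have ha' : 0 < z - a := sub_pos.2 ha
    have hb' : 0 < b - z := sub_pos.2 hb
    have e1 : pairV (z, a, b) = b - z := by
      simp only [pairV]; rw [if_pos (by nlinarith), abs_of_pos hb']
    have e2 : pairV (z, b, a) = z - a := by
      simp only [pairV]; rw [if_pos (by nlinarith), abs_of_neg (by linarith)]; ring
    have e3 : ∀ i j, τ i j (z, a, b) = t i (z, a, b) := by
      intro i j; simp only [τ]; rw [if_pos ha, if_pos hb]
    have e4 : ∀ i j, τ i j (z, b, a) = t j (z, a, b) := by
      intro i j; simp only [τ, sw]; rw [if_neg (by exact not_lt.2 hb.le), if_pos hb, if_pos ha]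
    simp only [e1, e2, e3, e4]
    have a0 := q0 (z, a)
    have a1 := sub_nonneg.2 (q1 (z, a))
    have b0 := q0 (z, b)
    have b1 := sub_nonneg.2 (q1 (z, b))
    have c1 := mul_le_mul_of_nonneg_left (hm1 (z, a)) hb'.le
    have c2 := mul_le_mul_of_nonneg_left (hm2 (z, b)) ha'.le
    obtain ⟨f1, f2, f3⟩ := ht (z, a, b) a b (b - z) (z - a) (K - z) (by positivity) (by positivity) (by positivity)
      (by positivity) (by ring) (by ring) hb' ha' (by ring) (by ring) (by linarith)
      (by simp only at c1 ⊢; linarith) (by simp only at c2 ⊢; linarith)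
    simp only at f1 f2 f3
    refine ⟨by linarith, by linarith, ?_⟩
    linarith
  refine ⟨τ 0 2, τ 1 3, mτ _ _, mτ _ _, n0 _ _, n1 _ _, n0 _ _, n1 _ _, ?_, ?_⟩
  · intro p hp
    simp only [τ, hp, lt_irrefl, if_false, and_self]
  · intro z x x'
    by_cases h : (x - z) * (x' - z) < 0
    · rcases lt_trichotomy x z with h1 | h1 | h1
      · have : z < x' := by nlinarith
        exact key z x x' h1 this
      · simp [h1] at h
      · have : x' < z := by nlinarith
        obtain ⟨f1, f2, f3⟩ := key z x' x this h1
        exact ⟨f1.symm, f2.symm, by linarith⟩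
    · have e1 : pairV (z, x, x') = 0 := by simp only [pairV]; rw [if_neg h]
      have e2 : pairV (z, x', x) = 0 := by simp only [pairV]; rw [if_neg (by rwa [mul_comm] at h)]
      simp [e1, e2]



theorem measurable_sw : Measurable sw := by unfold sw; fun_prop

section core
variable (ρ : Measure ℝ) [IsProbabilityMeasure ρ] (lam : Kernel ℝ ℝ) [IsMarkovKernel lam]

/-- base measure of the triples. -/
noncomputable def baseR : Measure (ℝ × ℝ × ℝ) := ρ ⊗ₘ (lam ×ₖ lam)

instance : IsProbabilityMeasure (baseR ρ lam) := by unfold baseR; infer_instance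

theorem baseR_sw : MeasurePreserving sw (baseR ρ lam) (baseR ρ lam) := by
  refine ⟨measurable_sw, ?_⟩
  refine Measure.ext_of_lintegral _ fun f hf => ?_
  rw [lintegral_map hf measurable_sw, baseR,
    Measure.lintegral_compProd hf, Measure.lintegral_compProd (f := fun p => f (sw p)) (hf.comp measurable_sw)]
  refine lintegral_congr fun z => ?_
  rw [Kernel.prod_apply]
  exact lintegral_prod_swap (fun v : ℝ × ℝ => f (z, v))

theorem baseR_wd (W : ℝ × ℝ × ℝ → ℝ) (mW : Measurable W)
    (hW : ∀ z, ∀ᵐ x ∂(lam z), ∫⁻ x', ENNReal.ofReal (W (z, x, x')) ∂(lam z) = 1) :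
    ((baseR ρ lam).withDensity (fun p => ENNReal.ofReal (W p))).map (fun p => (p.1, p.2.1)) =
      ρ ⊗ₘ lam := by
  refine Measure.ext_of_lintegral _ fun f hf => ?_
  have mW' : Measurable (fun p => ENNReal.ofReal (W p)) := by fun_prop
  rw [lintegral_map hf (by fun_prop), lintegral_withDensity_eq_lintegral_mul _ mW' (by fun_prop),
    baseR, Measure.lintegral_compProd (by fun_prop), Measure.lintegral_compProd hf]
  refine lintegral_congr fun z => ?_
  rw [Kernel.prod_apply, lintegral_prod _ (by fun_prop)]
  refine lintegral_congr_ae ?_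
  filter_upwards [hW z] with x hx
  simp only [Pi.mul_apply]
  rw [lintegral_mul_const _ (by fun_prop), hx, one_mul]

end core




theorem exists_mean_kernel {Ω β : Type*} [MeasurableSpace Ω] [mβ : MeasurableSpace β] (Q : Measure Ω)
    [IsProbabilityMeasure Q] (X : Ω → β) (Y : Ω → ℝ) (hX : Measurable X) (hYi : Integrable Y Q)
    (hY : Measurable Y) (g : β → ℝ) (hg : Measurable g)
    (hc : Q[Y | mβ.comap X] =ᵐ[Q] fun ω => g (X ω)) :
    ∃ κ : Kernel β ℝ, IsMarkovKernel κ ∧ (Q.map X) ⊗ₘ κ = Q.map (fun ω => (X ω, Y ω)) ∧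
      ∀ b, Integrable (fun y => y) (κ b) ∧ ∫ y, y ∂(κ b) = g b := by
  classical
  have h1 : ∀ᵐ b ∂(Q.map X), Integrable (fun y => y) (condDistrib Y X Q b) := by
    have := Integrable.condDistrib_ae_map (μ := Q) (X := X) (Y := Y) (f := fun p : β × ℝ => p.2) hY.aemeasurable
      (by
        rw [integrable_map_measure (by fun_prop) (by fun_prop)]
        exact hYi)
    exact this
  have h2 : ∀ᵐ b ∂(Q.map X), ∫ y, y ∂(condDistrib Y X Q b) = g b := by
    have h3 := condExp_ae_eq_integral_condDistrib' hX hYi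
    have h4 : ∀ᵐ ω ∂Q, ∫ y, y ∂(condDistrib Y X Q (X ω)) = g (X ω) := by
      filter_upwards [h3, hc] with ω a b
      rw [← a, b]
    rw [ae_map_iff hX.aemeasurable]
    · exact h4
    · refine measurableSet_eq_fun ?_ hg
      have : StronglyMeasurable (fun p : β × ℝ => p.2) := measurable_snd.stronglyMeasurable
      exact (this.integral_condDistrib (Y := Y) (X := X) (μ := Q)).measurable
  have h := h1.and h2
  obtain ⟨s, hs, hsm, hs0⟩ := exists_measurable_superset_of_null (ae_iff.1 h)
  refine ⟨Kernel.piecewise hsm (Kernel.deterministic g hg) (condDistrib Y X Q), inferInstance, ?_, ?_⟩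
  · rw [← compProd_map_condDistrib hY.aemeasurable]
    refine Measure.compProd_congr ?_
    have : ∀ᵐ b ∂(Q.map X), b ∉ s := measure_eq_zero_iff_ae_notMem.1 hs0
    filter_upwards [this] with b hb
    rw [Kernel.piecewise_apply, if_neg hb]
  · intro b
    rw [Kernel.piecewise_apply]
    split_ifs with hb
    · rw [Kernel.deterministic_apply]
      exact ⟨integrable_dirac (by simp), by simp⟩
    · by_contra hcon
      exact hb (hs hcon)


/-- indicator of the event `y > K - z`. -/
noncomputable def ind (K z y : ℝ) : ℝ := if K - z < y then 1 else 0

theorem ind_nonneg (K z y : ℝ) : 0 ≤ ind K z y := by unfold ind; split_ifs <;> norm_num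
theorem ind_le_one (K z y : ℝ) : ind K z y ≤ 1 := by unfold ind; split_ifs <;> norm_num
theorem measurable_ind (K : ℝ) : Measurable (fun p : ℝ × ℝ => ind K p.1 p.2) := by
  unfold ind
  exact Measurable.ite (measurableSet_lt (by fun_prop) (by fun_prop)) measurable_const measurable_const

theorem core (ρ : Measure ℝ) [IsProbabilityMeasure ρ] (lam : Kernel ℝ ℝ) [IsMarkovKernel lam]
    (κ : Kernel (ℝ × ℝ) ℝ) [IsMarkovKernel κ] (K : ℝ) (Γ : Measure ((ℝ × ℝ) × ℝ))
    (hΓ : Γ = (ρ ⊗ₘ lam) ⊗ₘ κ)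
    (hzi : Integrable (fun g : (ℝ × ℝ) × ℝ => g.1.1) Γ)
    (hxi : Integrable (fun g : (ℝ × ℝ) × ℝ => g.1.2) Γ)
    (hyi : Integrable (fun g : (ℝ × ℝ) × ℝ => g.2) Γ)
    (hκi : ∀ v, Integrable (fun y => y) (κ v)) (hκ : ∀ v, ∫ y, y ∂(κ v) = v.2)
    (W : ℝ × ℝ × ℝ → ℝ) (mW : Measurable W) (W0 : ∀ p, 0 ≤ W p)
    (hW : ∀ z, ∀ᵐ x ∂(lam z), ∫⁻ x', ENNReal.ofReal (W (z, x, x')) ∂(lam z) = 1)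
    (q m : ℝ × ℝ → ℝ) (hq : ∀ v, q v = ∫ y, ind K v.1 y ∂(κ v))
    (hm : ∀ v, m v = ∫ y, ind K v.1 y * y ∂(κ v))
    (τ1 τ0 : ℝ × ℝ × ℝ → ℝ) (mτ1 : Measurable τ1) (mτ0 : Measurable τ0)
    (h10 : ∀ p, 0 ≤ τ1 p) (h11 : ∀ p, τ1 p ≤ 1) (h00 : ∀ p, 0 ≤ τ0 p) (h01 : ∀ p, τ0 p ≤ 1)
    (hS : ∀ p, W (sw p) * (q (p.1, p.2.2) * τ1 (sw p) + (1 - q (p.1, p.2.2)) * τ0 (sw p)) =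
      W p * (q (p.1, p.2.1) * τ1 p + (1 - q (p.1, p.2.1)) * τ0 p))
    (hD : ∀ p, W (sw p) * (m (p.1, p.2.2) * τ1 (sw p) + (p.2.2 - m (p.1, p.2.2)) * τ0 (sw p)) =
      W p * (m (p.1, p.2.1) * τ1 p + (p.2.1 - m (p.1, p.2.1)) * τ0 p))
    (hJ : ∀ p : ℝ × ℝ × ℝ, 0 ≤
      W p * ((p.2.1 - p.1) * (q (p.1, p.2.1) * (1 - τ1 p)) + (p.2.2 - p.1) * (q (p.1, p.2.1) * τ1 p)) +
      W (sw p) * ((p.2.2 - p.1) * (q (p.1, p.2.2) * (1 - τ1 (sw p))) +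
        (p.2.1 - p.1) * (q (p.1, p.2.2) * τ1 (sw p)))) :
    ∃ π : Measure (ℝ × ℝ), IsMartingaleCoupling (Γ.map (fun g => g.1.2)) (Γ.map (fun g => g.2)) π ∧
      ∫ g, max (g.1.1 + g.2 - K) 0 ∂Γ ≤ ∫ p : ℝ × ℝ, max (p.1 + p.2 - K) 0 ∂π := by
  have mind := measurable_ind K
  have mI : ∀ z, Measurable (fun y => ind K z y) := fun z => mind.comp (by fun_prop : Measurable (fun y : ℝ => (z, y)))
  have iI : ∀ v, Integrable (fun y => ind K v.1 y) (κ v) := fun v =>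
    Integrable.of_bound (mI _).aestronglyMeasurable 1 (by
      refine Filter.Eventually.of_forall fun y => ?_
      rw [Real.norm_eq_abs, abs_of_nonneg (ind_nonneg _ _ _)]; exact ind_le_one _ _ _)
  have iIy : ∀ v, Integrable (fun y => ind K v.1 y * y) (κ v) := fun v =>
    (hκi v).bdd_mul (c := 1) (mI _).aestronglyMeasurable (by
      refine Filter.Eventually.of_forall fun y => ?_
      rw [Real.norm_eq_abs, abs_of_nonneg (ind_nonneg _ _ _)]; exact ind_le_one _ _ _)
  set BW := (baseR ρ lam).withDensity (fun p => ENNReal.ofReal (W p)) with hBW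
  have hBWm : BW.map (fun p => (p.1, p.2.1)) = ρ ⊗ₘ lam := baseR_wd ρ lam W mW hW
  have mpr : Measurable (fun p : ℝ × ℝ × ℝ => (p.1, p.2.1)) := by fun_prop
  set κ' : Kernel (ℝ × ℝ × ℝ) ℝ := κ.comap (fun p => (p.1, p.2.1)) mpr with hκ'
  set N := BW ⊗ₘ κ' with hN
  have mζ : Measurable (fun n : (ℝ × ℝ × ℝ) × ℝ => ((n.1.1, n.1.2.1), n.2)) := by fun_prop
  have hζ : N.map (fun n : (ℝ × ℝ × ℝ) × ℝ => ((n.1.1, n.1.2.1), n.2)) = Γ := by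
    refine Measure.ext_of_lintegral _ fun f hf => ?_
    rw [lintegral_map hf mζ, hΓ, Measure.lintegral_compProd hf, ← hBWm, hN,
      Measure.lintegral_compProd (by fun_prop), lintegral_map (hf.lintegral_kernel_prod_right') mpr]
    simp [hκ', Kernel.comap_apply]
  have pΓ : IsProbabilityMeasure Γ := by rw [hΓ]; infer_instance
  have pN : IsProbabilityMeasure N := by
    constructor
    have : (N.map (fun n : (ℝ × ℝ × ℝ) × ℝ => ((n.1.1, n.1.2.1), n.2))) Set.univ = 1 := by
      rw [hζ]; exact measure_univ
    rwa [Measure.map_apply mζ MeasurableSet.univ, Set.preimage_univ] at this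
  have zN : Integrable (fun n : (ℝ × ℝ × ℝ) × ℝ => n.1.1) N := by
    rw [← hζ] at hzi; exact hzi.comp_measurable mζ
  have xN : Integrable (fun n : (ℝ × ℝ × ℝ) × ℝ => n.1.2.1) N := by
    rw [← hζ] at hxi; exact hxi.comp_measurable mζ
  have yN : Integrable (fun n : (ℝ × ℝ × ℝ) × ℝ => n.2) N := by
    rw [← hζ] at hyi; exact hyi.comp_measurable mζ
  set A : (ℝ × ℝ × ℝ) × ℝ → ℝ := fun n => ind K n.1.1 n.2 with hA
  have mA : Measurable A := mind.comp (by fun_prop : Measurable (fun n : (ℝ × ℝ × ℝ) × ℝ => (n.1.1, n.2)))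
  have A0 : ∀ n, 0 ≤ A n := fun n => ind_nonneg _ _ _
  have A1 : ∀ n, A n ≤ 1 := fun n => ind_le_one _ _ _
  set τ : (ℝ × ℝ × ℝ) × ℝ → ℝ := fun n => A n * τ1 n.1 + (1 - A n) * τ0 n.1 with hτ
  have mτ : Measurable τ := by fun_prop
  have t0 : ∀ n, 0 ≤ τ n := fun n => by
    have := A0 n; have := sub_nonneg.2 (A1 n); have := h10 n.1; have := h00 n.1
    simp only [hτ]; positivity
  have t1 : ∀ n, τ n ≤ 1 := fun n => by
    simp only [hτ]
    nlinarith [A0 n, A1 n, mul_le_mul_of_nonneg_left (h11 n.1) (A0 n),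
      mul_le_mul_of_nonneg_left (h01 n.1) (sub_nonneg.2 (A1 n))]
  -- inner integrals
  have iτ : ∀ p, Integrable (fun y => τ (p, y)) (κ' p) := fun p =>
    Integrable.of_bound (mτ.comp (by fun_prop : Measurable (fun y : ℝ => (p, y)))).aestronglyMeasurable 1 (by
      refine Filter.Eventually.of_forall fun y => ?_
      rw [Real.norm_eq_abs, abs_of_nonneg (t0 _)]; exact t1 _)
  have hT : ∀ p, ∫ y, τ (p, y) ∂(κ' p) = q (p.1, p.2.1) * τ1 p + (1 - q (p.1, p.2.1)) * τ0 p := by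
    intro p
    have i : Integrable (fun y => ind K p.1 y) (κ (p.1, p.2.1)) := iI (p.1, p.2.1)
    have i2 : Integrable (fun y => 1 - ind K p.1 y) (κ (p.1, p.2.1)) := (integrable_const _).sub i
    simp only [hτ, hA, hκ', Kernel.comap_apply, hq]
    rw [integral_add (i.mul_const _) (i2.mul_const _), integral_mul_const,
      integral_mul_const, integral_sub (integrable_const _) i]
    simp
  have hDD : ∀ p, ∫ y, τ (p, y) * y ∂(κ' p) =
      m (p.1, p.2.1) * τ1 p + (p.2.1 - m (p.1, p.2.1)) * τ0 p := by
    intro p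
    have i : Integrable (fun y => ind K p.1 y * y) (κ (p.1, p.2.1)) := iIy (p.1, p.2.1)
    have j := hκi (p.1, p.2.1)
    have i2 : Integrable (fun y => y - ind K p.1 y * y) (κ (p.1, p.2.1)) := j.sub i
    simp only [hτ, hA, hκ', Kernel.comap_apply, hm]
    have e : ∀ y : ℝ, (ind K p.1 y * τ1 p + (1 - ind K p.1 y) * τ0 p) * y =
      (ind K p.1 y * y) * τ1 p + (y - ind K p.1 y * y) * τ0 p := fun y => by ring
    simp_rw [e]
    rw [integral_add (i.mul_const _) (i2.mul_const _), integral_mul_const,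
      integral_mul_const, integral_sub j i, hκ]
  have pres := baseR_sw ρ lam
  -- symmetry of the exchanged mass
  have F2a : ∀ g : ℝ × ℝ × ℝ → ENNReal, Measurable g → ∫⁻ n, ENNReal.ofReal (τ n) * g n.1 ∂N =
      ∫⁻ p, ENNReal.ofReal (W p * (q (p.1, p.2.1) * τ1 p + (1 - q (p.1, p.2.1)) * τ0 p)) * g p
        ∂(baseR ρ lam) := by
    intro g hg
    rw [hN, Measure.lintegral_compProd (by fun_prop)]
    have e : ∀ p, ∫⁻ y, ENNReal.ofReal (τ (p, y)) * g (p, y).1 ∂(κ' p) =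
        ENNReal.ofReal (q (p.1, p.2.1) * τ1 p + (1 - q (p.1, p.2.1)) * τ0 p) * g p := by
      intro p
      change ∫⁻ y, ENNReal.ofReal (τ (p, y)) * g p ∂(κ' p) = _
      have mt : Measurable (fun y => ENNReal.ofReal (τ (p, y))) :=
        (mτ.comp (by fun_prop : Measurable (fun y : ℝ => (p, y)))).ennreal_ofReal
      rw [lintegral_mul_const _ mt, ← hT p,
        ofReal_integral_eq_lintegral_ofReal (iτ p) (Filter.Eventually.of_forall fun y => t0 _)]
    simp_rw [e]
    have mq : Measurable q := by
      have : q = fun v => ∫ y, ind K v.1 y ∂(κ v) := funext hq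
      rw [this]
      have : StronglyMeasurable (fun w : (ℝ × ℝ) × ℝ => ind K w.1.1 w.2) :=
        (mind.comp (by fun_prop : Measurable (fun w : (ℝ × ℝ) × ℝ => (w.1.1, w.2)))).stronglyMeasurable
      exact (this.integral_kernel_prod_right').measurable
    rw [hBW, lintegral_withDensity_eq_lintegral_mul _ (by fun_prop) (by fun_prop)]
    refine lintegral_congr fun p => ?_
    simp only [Pi.mul_apply]
    rw [ENNReal.ofReal_mul (W0 p), mul_assoc]
  have F2 : ∀ g : ℝ × ℝ × ℝ → ENNReal, Measurable g → ∫⁻ n, ENNReal.ofReal (τ n) * g (sw n.1) ∂N =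
      ∫⁻ n, ENNReal.ofReal (τ n) * g n.1 ∂N := by
    intro g hg
    rw [F2a g hg, F2a (fun p => g (sw p)) (hg.comp measurable_sw)]
    have mq : Measurable q := by
      have : q = fun v => ∫ y, ind K v.1 y ∂(κ v) := funext hq
      rw [this]
      have : StronglyMeasurable (fun w : (ℝ × ℝ) × ℝ => ind K w.1.1 w.2) :=
        (mind.comp (by fun_prop : Measurable (fun w : (ℝ × ℝ) × ℝ => (w.1.1, w.2)))).stronglyMeasurable
      exact (this.integral_kernel_prod_right').measurable
    rw [← pres.lintegral_comp (f := fun p => ENNReal.ofReal (W p * (q (p.1, p.2.1) * τ1 p + (1 - q (p.1, p.2.1)) * τ0 p)) * g p) (by fun_prop)]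
    refine lintegral_congr fun p => ?_
    rw [← hS p]
    rfl
  -- integrability of the exchanged term
  have xpN : Integrable (fun n : (ℝ × ℝ × ℝ) × ℝ => τ n * n.1.2.2) N := by
    refine ⟨by fun_prop, ?_⟩
    have e1 : ∀ n : (ℝ × ℝ × ℝ) × ℝ, ‖τ n * n.1.2.2‖ₑ = ENNReal.ofReal (τ n) * ‖(sw n.1).2.1‖ₑ := by
      intro n; rw [enorm_mul, Real.enorm_of_nonneg (t0 n)]; rfl
    rw [HasFiniteIntegral]
    simp_rw [e1]
    rw [F2 (fun p => ‖p.2.1‖ₑ) (by fun_prop)]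
    refine lt_of_le_of_lt (lintegral_mono fun n => ?_) xN.2
    calc ENNReal.ofReal (τ n) * ‖n.1.2.1‖ₑ ≤ 1 * ‖n.1.2.1‖ₑ := by
          gcongr; exact ENNReal.ofReal_le_one.2 (t1 n)
      _ = _ := one_mul _
  have bd : ∀ (f g : (ℝ × ℝ × ℝ) × ℝ → ℝ) (C : ℝ), Measurable f → (∀ n, |f n| ≤ C) → Integrable g N →
      Integrable (fun n => f n * g n) N := by
    intro f g C hf hC hg
    exact hg.bdd_mul (c := C) hf.aestronglyMeasurable (Filter.Eventually.of_forall hC)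
  have tabs : ∀ n, |τ n| ≤ 1 := fun n => by rw [abs_of_nonneg (t0 n)]; exact t1 n
  have tabs' : ∀ n, |1 - τ n| ≤ 1 := fun n => by
    rw [abs_of_nonneg (sub_nonneg.2 (t1 n))]; linarith [t0 n]
  have Aabs : ∀ n, |A n| ≤ 1 := fun n => by rw [abs_of_nonneg (A0 n)]; exact A1 n
  have intBW : ∀ G : ℝ × ℝ × ℝ → ℝ, ∫ p, G p ∂BW = ∫ p, W p * G p ∂(baseR ρ lam) := by
    intro G
    have := integral_withDensity_eq_integral_smul (μ := baseR ρ lam) (f := fun p => (W p).toNNReal)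
      (by fun_prop) G
    rw [hBW]
    refine Eq.trans this ?_
    refine integral_congr_ae (Filter.Eventually.of_forall fun p => ?_)
    simp only [NNReal.smul_def, Real.coe_toNNReal _ (W0 p), smul_eq_mul]
  have swE : MeasurableEmbedding sw := by
    refine MeasurableEmbedding.of_measurable_inverse (g := sw) measurable_sw ?_ measurable_sw ?_
    · have : Set.range sw = Set.univ := by
        refine Set.range_eq_univ.2 fun p => ⟨sw p, rfl⟩
      rw [this]; exact MeasurableSet.univ
    · intro p; rfl
  -- signed symmetry
  have F3 : ∀ h : ℝ → ℝ, Measurable h → (∃ C, ∀ x, |h x| ≤ C) →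
      ∫ n, τ n * h n.1.2.2 * n.2 ∂N = ∫ n, τ n * h n.1.2.1 * n.2 ∂N := by
    rintro h mh ⟨C, hC⟩
    have gen : ∀ g : ℝ × ℝ × ℝ → ℝ, Measurable g → (∀ p, |g p| ≤ C) →
        ∫ n, τ n * g n.1 * n.2 ∂N = ∫ p, W p * (m (p.1, p.2.1) * τ1 p + (p.2.1 - m (p.1, p.2.1)) * τ0 p) * g p
          ∂(baseR ρ lam) := by
      intro g mg hg
      have i : Integrable (fun n => τ n * g n.1 * n.2) N := by
        refine bd (fun n => τ n * g n.1) _ (1 * C) (by fun_prop) (fun n => ?_) yN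
        rw [abs_mul]
        exact mul_le_mul (tabs n) (hg _) (abs_nonneg _) zero_le_one
      rw [hN] at i ⊢
      rw [Measure.integral_compProd i]
      have e : ∀ p, ∫ y, τ (p, y) * g (p, y).1 * (p, y).2 ∂(κ' p) =
          (m (p.1, p.2.1) * τ1 p + (p.2.1 - m (p.1, p.2.1)) * τ0 p) * g p := by
        intro p
        rw [← hDD p, ← integral_mul_const]
        refine integral_congr_ae (Filter.Eventually.of_forall fun y => ?_)
        simp only; ring
      simp_rw [e]
      rw [intBW]
      simp_rw [mul_assoc]
    rw [gen (fun p => h p.2.2) (by fun_prop) (fun p => hC _), gen (fun p => h p.2.1) (by fun_prop) (fun p => hC _)]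
    rw [← pres.integral_comp swE]
    refine integral_congr_ae (Filter.Eventually.of_forall fun p => ?_)
    simp only
    rw [← hD p]
    rfl
  have zτ : Integrable (fun n : (ℝ × ℝ × ℝ) × ℝ => τ n * (n.1.2.2 - n.1.1)) N := by
    have := xpN.sub (bd τ _ 1 mτ tabs zN)
    refine this.congr (Filter.Eventually.of_forall fun n => ?_)
    simp only [Pi.sub_apply]; ring
  have zτ' : Integrable (fun n : (ℝ × ℝ × ℝ) × ℝ => (1 - τ n) * (n.1.2.1 - n.1.1)) N :=
    bd (fun n => 1 - τ n) _ 1 (by fun_prop) tabs' (xN.sub zN)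
  have iF4 : Integrable (fun n => A n * ((1 - τ n) * (n.1.2.1 - n.1.1) + τ n * (n.1.2.2 - n.1.1))) N :=
    bd A _ 1 mA Aabs (zτ'.add zτ)
  have F4 : 0 ≤ ∫ n, A n * ((1 - τ n) * (n.1.2.1 - n.1.1) + τ n * (n.1.2.2 - n.1.1)) ∂N := by
    rw [hN] at iF4 ⊢
    rw [Measure.integral_compProd iF4]
    have e : ∀ p, ∫ y, A (p, y) * ((1 - τ (p, y)) * ((p, y).1.2.1 - (p, y).1.1) + τ (p, y) * ((p, y).1.2.2 - (p, y).1.1)) ∂(κ' p) =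
        (p.2.1 - p.1) * (q (p.1, p.2.1) * (1 - τ1 p)) + (p.2.2 - p.1) * (q (p.1, p.2.1) * τ1 p) := by
      intro p
      have e1 : ∀ y, A (p, y) * ((1 - τ (p, y)) * ((p, y).1.2.1 - (p, y).1.1) + τ (p, y) * ((p, y).1.2.2 - (p, y).1.1)) =
          ind K p.1 y * ((p.2.1 - p.1) * (1 - τ1 p) + (p.2.2 - p.1) * τ1 p) := by
        intro y
        simp only [hτ, hA, ind]
        split_ifs <;> ring
      simp_rw [e1]
      rw [integral_mul_const, hq]
      simp only [hκ', Kernel.comap_apply]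
      ring
    simp_rw [e]
    rw [intBW]
    set J : ℝ × ℝ × ℝ → ℝ := fun p => W p * ((p.2.1 - p.1) * (q (p.1, p.2.1) * (1 - τ1 p)) + (p.2.2 - p.1) * (q (p.1, p.2.1) * τ1 p)) with hJJ
    by_cases hi : Integrable J (baseR ρ lam)
    · have i2 : Integrable (fun p => J (sw p)) (baseR ρ lam) := pres.integrable_comp_of_integrable hi
      have e2 : ∫ p, J (sw p) ∂(baseR ρ lam) = ∫ p, J p ∂(baseR ρ lam) := pres.integral_comp swE J
      have e3 : 0 ≤ ∫ p, (J p + J (sw p)) ∂(baseR ρ lam) := integral_nonneg fun p => hJ p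
      rw [integral_add hi i2, e2] at e3
      linarith
    · rw [integral_undef hi]
  -- the coupling
  have m1 : Measurable (fun n : (ℝ × ℝ × ℝ) × ℝ => (n.1.2.1, n.2)) := by fun_prop
  have m2 : Measurable (fun n : (ℝ × ℝ × ℝ) × ℝ => (n.1.2.2, n.2)) := by fun_prop
  set π : Measure (ℝ × ℝ) :=
    (N.withDensity (fun n => ((1 - τ n).toNNReal : ENNReal))).map (fun n => (n.1.2.1, n.2)) +
    (N.withDensity (fun n => ((τ n).toNNReal : ENNReal))).map (fun n => (n.1.2.2, n.2)) with hπ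
  have lint : ∀ g : ℝ × ℝ → ENNReal, Measurable g → ∫⁻ p, g p ∂π =
      ∫⁻ n, ENNReal.ofReal (1 - τ n) * g (n.1.2.1, n.2) ∂N +
      ∫⁻ n, ENNReal.ofReal (τ n) * g (n.1.2.2, n.2) ∂N := by
    intro g hg
    rw [hπ, lintegral_add_measure, lintegral_map hg m1, lintegral_map hg m2,
      lintegral_withDensity_eq_lintegral_mul _ (by fun_prop) (by fun_prop),
      lintegral_withDensity_eq_lintegral_mul _ (by fun_prop) (by fun_prop)]
    rfl
  have sum1 : ∀ n, ENNReal.ofReal (1 - τ n) + ENNReal.ofReal (τ n) = 1 := fun n => by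
    rw [← ENNReal.ofReal_add (sub_nonneg.2 (t1 n)) (t0 n)]; simp
  have hfst : π.map Prod.fst = Γ.map (fun g => g.1.2) := by
    refine Measure.ext_of_lintegral _ fun g hg => ?_
    rw [lintegral_map hg measurable_fst, lintegral_map hg (by fun_prop), ← hζ, lintegral_map (by fun_prop) mζ,
      lint (fun p => g p.1) (by fun_prop)]
    have := F2 (fun p => g p.2.1) (by fun_prop)
    simp only [sw] at this
    simp only
    rw [this, ← lintegral_add_left (by fun_prop)]
    refine lintegral_congr fun n => ?_
    rw [← add_mul, sum1, one_mul]
  have hsnd : π.map Prod.snd = Γ.map (fun g => g.2) := by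
    refine Measure.ext_of_lintegral _ fun g hg => ?_
    rw [lintegral_map hg measurable_snd, lintegral_map hg (by fun_prop), ← hζ, lintegral_map (by fun_prop) mζ,
      lint (fun p => g p.2) (by fun_prop)]
    rw [← lintegral_add_left (by fun_prop)]
    refine lintegral_congr fun n => ?_
    rw [← add_mul, sum1, one_mul]
  have hprob : IsProbabilityMeasure π := by
    constructor
    have h1 : (π.map Prod.snd) Set.univ = 1 := by
      rw [hsnd, Measure.map_apply (by fun_prop) MeasurableSet.univ, Set.preimage_univ]; exact measure_univ
    rwa [Measure.map_apply measurable_snd MeasurableSet.univ, Set.preimage_univ] at h1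
  have bint : ∀ g : ℝ × ℝ → ℝ, Measurable g → Integrable (fun n => (1 - τ n) * g (n.1.2.1, n.2)) N →
      Integrable (fun n => τ n * g (n.1.2.2, n.2)) N → ∫ p, g p ∂π =
      ∫ n, (1 - τ n) * g (n.1.2.1, n.2) ∂N + ∫ n, τ n * g (n.1.2.2, n.2) ∂N := by
    intro g hg i1 i2
    have c1 : ∀ n (r : ℝ), (1 - τ n).toNNReal • r = (1 - τ n) * r := fun n r => by
      rw [NNReal.smul_def, Real.coe_toNNReal _ (sub_nonneg.2 (t1 n)), smul_eq_mul]
    have c2 : ∀ n (r : ℝ), (τ n).toNNReal • r = (τ n) * r := fun n r => by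
      rw [NNReal.smul_def, Real.coe_toNNReal _ (t0 n), smul_eq_mul]
    rw [hπ, integral_add_measure, integral_map m1.aemeasurable hg.aestronglyMeasurable,
      integral_map m2.aemeasurable hg.aestronglyMeasurable,
      integral_withDensity_eq_integral_smul (by fun_prop), integral_withDensity_eq_integral_smul (by fun_prop)]
    · simp_rw [c1, c2]
    · rw [integrable_map_measure hg.aestronglyMeasurable m1.aemeasurable,
        integrable_withDensity_iff_integrable_smul (by fun_prop)]
      simp_rw [c1]; exact i1
    · rw [integrable_map_measure hg.aestronglyMeasurable m2.aemeasurable,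
        integrable_withDensity_iff_integrable_smul (by fun_prop)]
      simp_rw [c2]; exact i2
  have yτ : Integrable (fun n : (ℝ × ℝ × ℝ) × ℝ => τ n * n.2) N := bd τ _ 1 mτ tabs yN
  refine ⟨π, ⟨hprob, hfst, hsnd, ?_⟩, ?_⟩
  · rintro h mh ⟨C, hC⟩
    have j1 : Integrable (fun n : (ℝ × ℝ × ℝ) × ℝ => h n.1.2.1 * (n.2 - n.1.2.1)) N :=
      bd (fun n => h n.1.2.1) _ C (by fun_prop) (fun n => hC _) (yN.sub xN)
    have j2 : Integrable (fun n : (ℝ × ℝ × ℝ) × ℝ => τ n * (h n.1.2.1 * (n.2 - n.1.2.1))) N :=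
      bd τ _ 1 mτ tabs j1
    have k1 : Integrable (fun n : (ℝ × ℝ × ℝ) × ℝ => τ n * h n.1.2.2 * n.2) N := by
      refine (bd (fun n => h n.1.2.2) _ C (by fun_prop) (fun n => hC _) yτ).congr
        (Filter.Eventually.of_forall fun n => ?_)
      simp only; ring
    have k2 : Integrable (fun n : (ℝ × ℝ × ℝ) × ℝ => τ n * (h n.1.2.2 * n.1.2.2)) N := by
      refine (bd (fun n => h n.1.2.2) _ C (by fun_prop) (fun n => hC _) xpN).congr
        (Filter.Eventually.of_forall fun n => ?_)
      simp only; ring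
    have k3 : Integrable (fun n : (ℝ × ℝ × ℝ) × ℝ => τ n * h n.1.2.1 * n.2) N := by
      refine (bd (fun n => h n.1.2.1) _ C (by fun_prop) (fun n => hC _) yτ).congr
        (Filter.Eventually.of_forall fun n => ?_)
      simp only; ring
    have k4 : Integrable (fun n : (ℝ × ℝ × ℝ) × ℝ => τ n * (h n.1.2.1 * n.1.2.1)) N := by
      refine (bd (fun n => h n.1.2.1) _ C (by fun_prop) (fun n => hC _) (bd τ _ 1 mτ tabs xN)).congr
        (Filter.Eventually.of_forall fun n => ?_)
      simp only; ring
    have i1 : Integrable (fun n : (ℝ × ℝ × ℝ) × ℝ => (1 - τ n) * (h n.1.2.1 * (n.2 - n.1.2.1))) N :=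
      bd (fun n => 1 - τ n) _ 1 (by fun_prop) tabs' j1
    have i2 : Integrable (fun n : (ℝ × ℝ × ℝ) × ℝ => τ n * (h n.1.2.2 * (n.2 - n.1.2.2))) N := by
      refine (k1.sub k2).congr (Filter.Eventually.of_forall fun n => ?_)
      simp only [Pi.sub_apply]; ring
    rw [bint (fun p => h p.1 * (p.2 - p.1)) (by fun_prop) i1 i2]
    -- symmetry of the `h x * x` term
    have F5 : ∫ n, τ n * (h n.1.2.2 * n.1.2.2) ∂N = ∫ n, τ n * (h n.1.2.1 * n.1.2.1) ∂N := by
      have hpos : ∀ φ : ℝ → ℝ, Measurable φ → ∫⁻ n, ENNReal.ofReal (τ n * φ n.1.2.2) ∂N =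
          ∫⁻ n, ENNReal.ofReal (τ n * φ n.1.2.1) ∂N := by
        intro φ hφ
        have := F2 (fun p => ENNReal.ofReal (φ p.2.1)) (by fun_prop)
        simp_rw [ENNReal.ofReal_mul (t0 _)]
        exact this
      rw [integral_eq_lintegral_pos_part_sub_lintegral_neg_part k2,
        integral_eq_lintegral_pos_part_sub_lintegral_neg_part k4]
      have a1 := hpos (fun x => h x * x) (by fun_prop)
      have a2 := hpos (fun x => - (h x * x)) (by fun_prop)
      simp only [mul_neg] at a2
      rw [a1, a2]
    have G1 : ∫ n, h n.1.2.1 * (n.2 - n.1.2.1) ∂N = 0 := by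
      have j1' := j1
      rw [hN] at j1' ⊢
      rw [Measure.integral_compProd j1']
      have e : ∀ p, ∫ y, h (p, y).1.2.1 * ((p, y).2 - (p, y).1.2.1) ∂(κ' p) = 0 := by
        intro p
        change ∫ y, h p.2.1 * (y - p.2.1) ∂(κ' p) = 0
        rw [integral_const_mul]
        simp only [hκ', Kernel.comap_apply]
        rw [integral_sub (hκi _) (integrable_const _), hκ]
        simp
      simp_rw [e]
      simp
    have s1 : ∫ n, (1 - τ n) * (h n.1.2.1 * (n.2 - n.1.2.1)) ∂N =
        ∫ n, h n.1.2.1 * (n.2 - n.1.2.1) ∂N - ∫ n, τ n * (h n.1.2.1 * (n.2 - n.1.2.1)) ∂N := by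
      rw [← integral_sub j1 j2]
      congr 1; ext n; ring
    have s2 : ∫ n, τ n * (h n.1.2.1 * (n.2 - n.1.2.1)) ∂N =
        ∫ n, τ n * h n.1.2.1 * n.2 ∂N - ∫ n, τ n * (h n.1.2.1 * n.1.2.1) ∂N := by
      rw [← integral_sub k3 k4]
      congr 1; ext n; ring
    have s3 : ∫ n, τ n * (h n.1.2.2 * (n.2 - n.1.2.2)) ∂N =
        ∫ n, τ n * h n.1.2.2 * n.2 ∂N - ∫ n, τ n * (h n.1.2.2 * n.1.2.2) ∂N := by
      rw [← integral_sub k1 k2]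
      congr 1; ext n; ring
    have s4 := F3 h mh ⟨C, hC⟩
    simp only at s1 s2 s3 ⊢
    rw [s1, s2, s3, s4, F5, G1]
    ring
  · have i1 : Integrable (fun n : (ℝ × ℝ × ℝ) × ℝ => (1 - τ n) * max (n.1.2.1 + n.2 - K) 0) N :=
      bd (fun n => 1 - τ n) _ 1 (by fun_prop) tabs' (((xN.add yN).sub (integrable_const K)).pos_part)
    have i2 : Integrable (fun n : (ℝ × ℝ × ℝ) × ℝ => τ n * max (n.1.2.2 + n.2 - K) 0) N := by
      refine (((xpN.add yτ).sub (bd τ (fun _ => K) 1 mτ tabs (integrable_const K))).pos_part).congr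
        (Filter.Eventually.of_forall fun n => ?_)
      simp only [Pi.sub_apply, Pi.add_apply]
      rw [mul_max_of_nonneg _ _ (t0 n), mul_zero]
      congr 1; ring
    rw [bint (fun p => max (p.1 + p.2 - K) 0) (by fun_prop) i1 i2, ← integral_add i1 i2, ← hζ,
      integral_map mζ.aemeasurable (by fun_prop)]
    have i3 : Integrable (fun n : (ℝ × ℝ × ℝ) × ℝ => max (n.1.1 + n.2 - K) 0) N :=
      ((zN.add yN).sub (integrable_const K)).pos_part
    have step : ∫ n, (max (n.1.1 + n.2 - K) 0 + A n * ((1 - τ n) * (n.1.2.1 - n.1.1) + τ n * (n.1.2.2 - n.1.1))) ∂N ≤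
        ∫ n, ((1 - τ n) * max (n.1.2.1 + n.2 - K) 0 + τ n * max (n.1.2.2 + n.2 - K) 0) ∂N := by
      refine integral_mono (i3.add iF4) (i1.add i2) fun n => ?_
      have a1 := sub_nonneg.2 (t1 n)
      have a2 := t0 n
      simp only
      by_cases hc : K - n.1.1 < n.2
      · have e : A n = 1 := by simp only [hA, ind]; rw [if_pos hc]
        rw [e, max_eq_left (by linarith : (0:ℝ) ≤ n.1.1 + n.2 - K)]
        have b1 := mul_le_mul_of_nonneg_left (le_max_left (n.1.2.1 + n.2 - K) 0) a1
        have b2 := mul_le_mul_of_nonneg_left (le_max_left (n.1.2.2 + n.2 - K) 0) a2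
        linarith
      · have e : A n = 0 := by simp only [hA, ind]; rw [if_neg hc]
        rw [e, max_eq_right (by linarith : n.1.1 + n.2 - K ≤ 0)]
        have b1 := mul_nonneg a1 (le_max_right (n.1.2.1 + n.2 - K) 0)
        have b2 := mul_nonneg a2 (le_max_right (n.1.2.2 + n.2 - K) 0)
        linarith
    rw [integral_add i3 iF4] at step
    linarith


theorem measurable_pairV : Measurable pairV := by
  unfold pairV
  exact Measurable.ite (measurableSet_lt (by fun_prop) (by fun_prop)) (by fun_prop) measurable_const

theorem pairV_nonneg (p : ℝ × ℝ × ℝ) : 0 ≤ pairV p := by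
  unfold pairV; split_ifs <;> positivity

theorem weight_exists (lam : Kernel ℝ ℝ) [IsMarkovKernel lam]
    (hi : ∀ z, Integrable (fun x => x) (lam z)) (hmean : ∀ z, ∫ x, x ∂(lam z) = z) :
    ∃ s : ℝ → ℝ, Measurable s ∧ (∀ z, 0 ≤ s z) ∧
      ∀ z, ∀ᵐ x ∂(lam z), ∫⁻ x', ENNReal.ofReal
        (if x = z then 1 else pairV (z, x, x') / s z) ∂(lam z) = 1 := by
  refine ⟨fun z => ∫ x, max (x - z) 0 ∂(lam z), ?_, fun z => integral_nonneg fun x => le_max_right _ _, ?_⟩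
  · have : StronglyMeasurable (fun w : ℝ × ℝ => max (w.2 - w.1) 0) := by
      exact (by fun_prop : Measurable (fun w : ℝ × ℝ => max (w.2 - w.1) 0)).stronglyMeasurable
    exact (this.integral_kernel_prod_right').measurable
  · intro z
    have i0 : Integrable (fun x => x - z) (lam z) := (hi z).sub (integrable_const z)
    have i1 : Integrable (fun x => max (x - z) 0) (lam z) := i0.pos_part
    have i2 : Integrable (fun x => max (-(x - z)) 0) (lam z) := i0.neg_part
    have e0 : ∫ x, (x - z) ∂(lam z) = 0 := by
      rw [integral_sub (hi z) (integrable_const z), hmean]; simp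
    have e1 : ∫ x, max (-(x - z)) 0 ∂(lam z) = ∫ x, max (x - z) 0 ∂(lam z) := by
      have : ∫ x, (max (x - z) 0 - max (-(x - z)) 0) ∂(lam z) = 0 := by
        refine Eq.trans ?_ e0
        congr 1; ext x
        rcases le_total (x - z) 0 with h | h
        · rw [max_eq_right h, max_eq_left (by linarith)]; ring
        · rw [max_eq_left h, max_eq_right (by linarith)]; ring
      rw [integral_sub i1 i2] at this
      linarith
    set s := ∫ x, max (x - z) 0 ∂(lam z) with hs
    have s0 : 0 ≤ s := integral_nonneg fun x => le_max_right _ _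
    rcases s0.eq_or_lt with h | h
    · have a1 := (integral_eq_zero_iff_of_nonneg (fun x => le_max_right _ _) i1).1 (hs.symm.trans h.symm)
      have a2 := (integral_eq_zero_iff_of_nonneg (fun x => le_max_right _ _) i2).1 (e1.trans h.symm)
      filter_upwards [a1, a2] with x h1 h2
      have b1 : x - z ≤ 0 := by have := le_max_left (x - z) 0; simp only [Pi.zero_apply] at h1; linarith
      have b2 : -(x - z) ≤ 0 := by have := le_max_left (-(x - z)) 0; simp only [Pi.zero_apply] at h2; linarith
      have : x = z := by linarith
      simp [this]
    · refine Filter.Eventually.of_forall fun x => ?_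
      have key : ∀ f : ℝ → ℝ, Integrable f (lam z) → (∀ x', 0 ≤ f x') → ∫ x', f x' ∂(lam z) = s →
          ∫⁻ x', ENNReal.ofReal (f x' / s) ∂(lam z) = 1 := by
        intro f hf f0 hfs
        rw [← ofReal_integral_eq_lintegral_ofReal (hf.div_const s)
          (Filter.Eventually.of_forall fun x' => div_nonneg (f0 x') s0), integral_div, hfs, div_self h.ne']
        simp
      rcases lt_trichotomy x z with hx | hx | hx
      · simp only [if_neg hx.ne]
        have e : ∀ x', pairV (z, x, x') = max (x' - z) 0 := by
          intro x'
          simp only [pairV]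
          split_ifs with hc
          · have : 0 < x' - z := by by_contra hn; push Not at hn; nlinarith
            rw [abs_of_pos this, max_eq_left this.le]
          · have : x' - z ≤ 0 := by by_contra hn; push Not at hn; apply hc; nlinarith
            rw [max_eq_right this]
        simp_rw [e]
        exact key _ i1 (fun _ => le_max_right _ _) rfl
      · simp [hx]
      · simp only [if_neg hx.ne']
        have e : ∀ x', pairV (z, x, x') = max (-(x' - z)) 0 := by
          intro x'
          simp only [pairV]
          split_ifs with hc
          · have : x' - z < 0 := by by_contra hn; push Not at hn; nlinarith
            rw [abs_of_neg this, max_eq_left (by linarith)]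
          · have : 0 ≤ x' - z := by by_contra hn; push Not at hn; apply hc; nlinarith
            rw [max_eq_right (by linarith)]
        simp_rw [e]
        exact key _ i2 (fun _ => le_max_right _ _) e1

theorem core2 (ρ : Measure ℝ) [IsProbabilityMeasure ρ] (lam : Kernel ℝ ℝ) [IsMarkovKernel lam]
    (κ : Kernel (ℝ × ℝ) ℝ) [IsMarkovKernel κ] (K : ℝ) (Γ : Measure ((ℝ × ℝ) × ℝ))
    (hΓ : Γ = (ρ ⊗ₘ lam) ⊗ₘ κ)
    (hzi : Integrable (fun g : (ℝ × ℝ) × ℝ => g.1.1) Γ)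
    (hxi : Integrable (fun g : (ℝ × ℝ) × ℝ => g.1.2) Γ)
    (hyi : Integrable (fun g : (ℝ × ℝ) × ℝ => g.2) Γ)
    (hi : ∀ z, Integrable (fun x => x) (lam z)) (hmean : ∀ z, ∫ x, x ∂(lam z) = z)
    (hκi : ∀ v, Integrable (fun y => y) (κ v)) (hκ : ∀ v, ∫ y, y ∂(κ v) = v.2) :
    ∃ π : Measure (ℝ × ℝ), IsMartingaleCoupling (Γ.map (fun g => g.1.2)) (Γ.map (fun g => g.2)) π ∧
      ∫ g, max (g.1.1 + g.2 - K) 0 ∂Γ ≤ ∫ p : ℝ × ℝ, max (p.1 + p.2 - K) 0 ∂π := by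
  classical
  obtain ⟨s, ms, s0, hs⟩ := weight_exists lam hi hmean
  have mind := measurable_ind K
  have mI : ∀ z, Measurable (fun y => ind K z y) := fun z => mind.comp (by fun_prop : Measurable (fun y : ℝ => (z, y)))
  have iI : ∀ v : ℝ × ℝ, Integrable (fun y => ind K v.1 y) (κ v) := fun v =>
    Integrable.of_bound (mI _).aestronglyMeasurable 1 (by
      refine Filter.Eventually.of_forall fun y => ?_
      rw [Real.norm_eq_abs, abs_of_nonneg (ind_nonneg _ _ _)]; exact ind_le_one _ _ _)
  have iIy : ∀ v : ℝ × ℝ, Integrable (fun y => ind K v.1 y * y) (κ v) := fun v =>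
    (hκi v).bdd_mul (c := 1) (mI _).aestronglyMeasurable (by
      refine Filter.Eventually.of_forall fun y => ?_
      rw [Real.norm_eq_abs, abs_of_nonneg (ind_nonneg _ _ _)]; exact ind_le_one _ _ _)
  have mw : Measurable (fun w : (ℝ × ℝ) × ℝ => ind K w.1.1 w.2) :=
    mind.comp (by fun_prop : Measurable (fun w : (ℝ × ℝ) × ℝ => (w.1.1, w.2)))
  obtain ⟨q, hq⟩ : ∃ q : ℝ × ℝ → ℝ, ∀ v, q v = ∫ y, ind K v.1 y ∂(κ v) := ⟨_, fun v => rfl⟩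
  obtain ⟨m, hm⟩ : ∃ m : ℝ × ℝ → ℝ, ∀ v, m v = ∫ y, ind K v.1 y * y ∂(κ v) := ⟨_, fun v => rfl⟩
  have mq : Measurable q := by
    rw [show q = fun v => ∫ y, ind K v.1 y ∂(κ v) from funext hq]
    exact (mw.stronglyMeasurable.integral_kernel_prod_right').measurable
  have mm : Measurable m := by
    rw [show m = fun v => ∫ y, ind K v.1 y * y ∂(κ v) from funext hm]
    exact ((mw.mul measurable_snd).stronglyMeasurable.integral_kernel_prod_right').measurable
  have q0 : ∀ v, 0 ≤ q v := fun v => by rw [hq]; exact integral_nonneg fun y => ind_nonneg _ _ _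
  have q1 : ∀ v, q v ≤ 1 := fun v => by
    rw [hq]
    have := integral_mono (iI v) (integrable_const (1 : ℝ)) (fun y => ind_le_one K v.1 y)
    simpa using this
  have hm1 : ∀ v, (K - v.1) * q v ≤ m v := fun v => by
    rw [hq, hm, ← integral_const_mul]
    refine integral_mono ((iI v).const_mul _) (iIy v) fun y => ?_
    simp only [ind]
    split_ifs with hc <;> linarith
  have hm2 : ∀ v, v.2 - m v ≤ (K - v.1) * (1 - q v) := fun v => by
    have a : ∫ y, (y - ind K v.1 y * y) ∂(κ v) = v.2 - m v := by
      rw [integral_sub (hκi v) (iIy v), hκ, hm]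
    have b : ∫ y, (K - v.1) * (1 - ind K v.1 y) ∂(κ v) = (K - v.1) * (1 - q v) := by
      rw [integral_const_mul, integral_sub (integrable_const _) (iI v), hq]; simp
    rw [← a, ← b]
    refine integral_mono ((hκi v).sub (iIy v)) (((integrable_const _).sub (iI v)).const_mul _) fun y => ?_
    simp only [ind]
    split_ifs with hc <;> linarith
  obtain ⟨τ1, τ0, mτ1, mτ0, h10, h11, h00, h01, hz, hid⟩ := tau_exists K q m mq mm q0 q1 hm1 hm2
  have mV := measurable_pairV
  have Vz : ∀ z x, pairV (z, x, z) = 0 := fun z x => by simp [pairV]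
  have Vz' : ∀ z x, pairV (z, z, x) = 0 := fun z x => by simp [pairV]
  obtain ⟨W, hWd⟩ : ∃ W : ℝ × ℝ × ℝ → ℝ, W = fun p => if p.2.1 = p.1 then 1 else pairV p / s p.1 := ⟨_, rfl⟩
  have hW : ∀ z x x', W (z, x, x') = if x = z then 1 else pairV (z, x, x') / s z := fun z x x' => by rw [hWd]
  refine core ρ lam κ K Γ hΓ hzi hxi hyi hκi hκ
    W ?_ ?_ (by simp_rw [hW]; exact hs) q m hq hm τ1 τ0 mτ1 mτ0 h10 h11 h00 h01 ?_ ?_ ?_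
  · rw [hWd]
    exact Measurable.ite (measurableSet_eq_fun (by fun_prop) (by fun_prop)) measurable_const (by fun_prop)
  · rintro ⟨z, x, x'⟩
    rw [hW]
    split_ifs
    · exact zero_le_one
    · exact div_nonneg (pairV_nonneg _) (s0 _)
  all_goals
    rintro ⟨z, x, x'⟩
    obtain ⟨H1, H2, H3⟩ := hid z x x'
    have Z1 := hz (z, x, x')
    have Z2 := hz (z, x', x)
    simp only at Z1 Z2
    simp only [sw, hW]
    by_cases hx : x = z
    · subst hx
      obtain ⟨c1, c2⟩ := Z1 rfl
      by_cases hx' : x' = x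
      · subst hx'
        simp [c1, c2]
      · simp [c1, c2, hx', Vz]
    · by_cases hx' : x' = z
      · subst hx'
        obtain ⟨c1, c2⟩ := Z2 rfl
        simp [c1, c2, hx, Vz]
      · simp only [if_neg hx, if_neg hx']
        first
        | (rw [div_mul_eq_mul_div, div_mul_eq_mul_div, H1])
        | (rw [div_mul_eq_mul_div, div_mul_eq_mul_div, H2])
        | (rw [div_mul_eq_mul_div, div_mul_eq_mul_div, ← add_div]; exact div_nonneg H3 (s0 z))

theorem final {Ω : Type*} (F0 F1 : MeasurableSpace Ω) [mΩ : MeasurableSpace Ω] (Q : Measure Ω) [IsProbabilityMeasure Q]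
    (Z X Y : Ω → ℝ) (hF0 : F0 ≤ mΩ) (hF1 : F1 ≤ mΩ) (h01 : F0 ≤ F1)
    (mZ : Measurable[F0] Z) (mX : Measurable[F1] X) (mY : Measurable Y)
    (iZ : Integrable Z Q) (iX : Integrable X Q) (iY : Integrable Y Q)
    (hX : Q[X | F0] =ᵐ[Q] Z) (hY : Q[Y | F1] =ᵐ[Q] X) (K : ℝ) :
    ∃ π : Measure (ℝ × ℝ), IsMartingaleCoupling (Q.map X) (Q.map Y) π ∧
      ∫ ω, max (Z ω + Y ω - K) 0 ∂Q ≤ ∫ p : ℝ × ℝ, max (p.1 + p.2 - K) 0 ∂π := by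
  have mZ' : Measurable Z := mZ.mono hF0 le_rfl
  have mX' : Measurable X := mX.mono hF1 le_rfl
  have tower : ∀ (m1 m2 : MeasurableSpace Ω) (U V : Ω → ℝ), m1 ≤ m2 → m2 ≤ mΩ → Measurable[m1] V →
      Integrable V Q → Q[U | m2] =ᵐ[Q] V → Q[U | m1] =ᵐ[Q] V := by
    intro m1 m2 U V h12 h2 hV iV hU
    have a : Q[Q[U | m2] | m1] =ᵐ[Q] Q[U | m1] := condExp_condExp_of_le h12 h2
    have b : Q[Q[U | m2] | m1] =ᵐ[Q] Q[V | m1] := condExp_congr_ae hU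
    rw [condExp_of_stronglyMeasurable (h12.trans h2) hV.stronglyMeasurable iV] at b
    exact a.symm.trans b
  obtain ⟨lam, hlam, el, hl⟩ := exists_mean_kernel Q Z X mZ' iX mX' (fun z => z) (by fun_prop)
    (tower _ F0 X Z mZ.comap_le hF0 (comap_measurable Z) iZ hX)
  have mZX : Measurable[F1] (fun ω => (Z ω, X ω)) := (mZ.mono h01 le_rfl).prodMk mX
  have mZX' : Measurable (fun ω => (Z ω, X ω)) := mZ'.prodMk mX'
  obtain ⟨κ, hκm, ek, hk⟩ := exists_mean_kernel Q (fun ω => (Z ω, X ω)) Y mZX' iY mY Prod.snd (by fun_prop)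
    (tower _ F1 Y X mZX.comap_le hF1
      (measurable_snd.comp (comap_measurable (fun ω => (Z ω, X ω)))) iX hY)
  have : IsProbabilityMeasure (Q.map Z) := Measure.isProbabilityMeasure_map mZ'.aemeasurable
  have mT : Measurable (fun ω => ((Z ω, X ω), Y ω)) := mZX'.prodMk mY
  have int : ∀ f : (ℝ × ℝ) × ℝ → ℝ, Measurable f → Integrable (fun ω => f ((Z ω, X ω), Y ω)) Q →
      Integrable f (Q.map (fun ω => ((Z ω, X ω), Y ω))) := fun f hf h =>
    (integrable_map_measure hf.aestronglyMeasurable mT.aemeasurable).2 h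
  obtain ⟨π, h1, h2⟩ := core2 (Q.map Z) lam κ K (Q.map (fun ω => ((Z ω, X ω), Y ω)))
    (by rw [el, ek]) (int _ (by fun_prop) iZ) (int _ (by fun_prop) iX) (int _ (by fun_prop) iY)
    (fun z => (hl z).1) (fun z => (hl z).2) (fun v => (hk v).1) (fun v => (hk v).2)
  refine ⟨π, ?_, ?_⟩
  · rw [Measure.map_map (by fun_prop) mT, Measure.map_map (by fun_prop) mT] at h1
    exact h1
  · rw [integral_map mT.aemeasurable (by fun_prop)] at h2
    exact h2

end helpers

/-- Theorem: if `π` maximises `∫ (x + y - K)₊` over all martingale couplings of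
`Law(X₁)` and `Law(X₂)`, then for every `0 ≤ t ≤ 1` the value
`E[(X_t + X₂ - K)₊]` is dominated by `∫ (x + y - K)₊ dπ`. -/
theorem asian_two_marginal_domination
    {Ω : Type*} [MeasurableSpace Ω] (Q : Measure Ω) [IsProbabilityMeasure Q]
    (F : ℝ → MeasurableSpace Ω)
    (hFle : ∀ t : ℝ, F t ≤ (inferInstance : MeasurableSpace Ω))
    (hFmono : Monotone F)
    (X : ℝ → Ω → ℝ)
    (hadapt : ∀ t ∈ Set.Icc (0 : ℝ) 2, Measurable[F t] (X t))
    (hint : ∀ t ∈ Set.Icc (0 : ℝ) 2, Integrable (X t) Q)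
    (hmart : ∀ s t : ℝ, 0 ≤ s → s ≤ t → t ≤ 2 → Q[X t|F s] =ᵐ[Q] X s)
    (K : ℝ)
    (π : Measure (ℝ × ℝ))
    (hπ : IsMartingaleCoupling (Q.map (X 1)) (Q.map (X 2)) π)
    (hmax : ∀ π' : Measure (ℝ × ℝ),
      IsMartingaleCoupling (Q.map (X 1)) (Q.map (X 2)) π' →
      ∫ p : ℝ × ℝ, max (p.1 + p.2 - K) 0 ∂π' ≤
        ∫ p : ℝ × ℝ, max (p.1 + p.2 - K) 0 ∂π) :
    ∀ t : ℝ, 0 ≤ t → t ≤ 1 →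
      ∫ ω, max (X t ω + X 2 ω - K) 0 ∂Q ≤
        ∫ p : ℝ × ℝ, max (p.1 + p.2 - K) 0 ∂π := by
  intro t ht0 ht1
  have m0 : t ∈ Set.Icc (0 : ℝ) 2 := ⟨ht0, by linarith⟩
  have m1 : (1 : ℝ) ∈ Set.Icc (0 : ℝ) 2 := ⟨by norm_num, by norm_num⟩
  have m2 : (2 : ℝ) ∈ Set.Icc (0 : ℝ) 2 := ⟨by norm_num, by norm_num⟩
  obtain ⟨π', h1, h2⟩ := final (F t) (F 1) Q (X t) (X 1) (X 2) (hFle t) (hFle 1) (hFmono ht1)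
    (hadapt t m0) (hadapt 1 m1) ((hadapt 2 m2).mono (hFle 2) le_rfl) (hint t m0) (hint 1 m1) (hint 2 m2)
    (hmart t 1 ht0 ht1 (by norm_num)) (hmart 1 2 (by norm_num) (by norm_num) le_rfl) K
  exact h2.trans (hmax π' h1)
end
end
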